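/- arXiv:1811.03693 — 3 statements merged into one kernel-verified Lean document; each statement's English description precedes it below -/
import Mathlib

section
/- There exists a universal constant C > 0 such that the following holds. Let C₀ > 0 and M ≥ 2, and let ρ : 𝕋² → [0,∞) be measurable with ∫_{𝕋²} ρ dx = 1, ‖ρ‖_{L²(𝕋²)} ≤ C₀ and ‖ρ‖_{L^∞(𝕋²)} ≤ M. Then sup_{x ∈ 𝕋²} ∫_{𝕋²} |ρ(y) − 1| / d(x,y) dy ≤ C (1 + C₀) ( 1 + (log M)^{1/2} ). -/
open MeasureTheory Real Set
open scoped ENNReal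

noncomputable section

/-- The fundamental domain `[0,1)^d` of the flat torus `𝕋^d = ℝ^d/ℤ^d`. -/
def Tcube (d : ℕ) : Set (Fin d → ℝ) := Set.univ.pi fun _ => Set.Ico (0:ℝ) 1

/-- The Haar (Lebesgue) probability measure on the torus `𝕋^d`, realised as Lebesgue
measure restricted to the fundamental domain `[0,1)^d`. -/
def torusMeasure (d : ℕ) : Measure (Fin d → ℝ) := volume.restrict (Tcube d)

/-- The Euclidean norm on `ℝ^d`. -/
def euclNorm {d : ℕ} (v : Fin d → ℝ) : ℝ := Real.sqrt (∑ i, (v i) ^ 2)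

/-- The lattice vector in `ℝ^d` associated to `k ∈ ℤ^d`. -/
def latVec {d : ℕ} (k : Fin d → ℤ) : Fin d → ℝ := fun i => (k i : ℝ)

/-- `ℤ^d`-periodicity of a function on `ℝ^d`; such functions are exactly the functions
on the torus `𝕋^d`. -/
def ZPeriodic {d : ℕ} {α : Type*} (f : (Fin d → ℝ) → α) : Prop :=
  ∀ (x : Fin d → ℝ) (k : Fin d → ℤ), f (x + latVec k) = f x

/-- The quotient (flat) metric on the torus `𝕋^d`, expressed on representatives in `ℝ^d`. -/
def tdist {d : ℕ} (x y : Fin d → ℝ) : ℝ := ⨅ k : Fin d → ℤ, euclNorm (x - y + latVec k)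

/-- The gradient of a scalar function on `ℝ^d`, as an `ℝ^d`-valued function. -/
def grad {d : ℕ} (U : (Fin d → ℝ) → ℝ) (x : Fin d → ℝ) : Fin d → ℝ :=
  fun i => fderiv ℝ U x (Pi.single i 1)

/-- The Laplacian: the sum of the second partial derivatives. -/
def lap {d : ℕ} (U : (Fin d → ℝ) → ℝ) (x : Fin d → ℝ) : ℝ :=
  ∑ i, fderiv ℝ (fun y => fderiv ℝ U y (Pi.single i 1)) x (Pi.single i 1)

/-- The Hessian matrix of second partial derivatives. -/
def hess {d : ℕ} (U : (Fin d → ℝ) → ℝ) (x : Fin d → ℝ) : Fin d → Fin d → ℝ :=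
  fun i j => fderiv ℝ (fun y => fderiv ℝ U y (Pi.single j 1)) x (Pi.single i 1)

/-- Frobenius (Euclidean) norm of a `d × d` matrix. -/
def frobNorm {d : ℕ} (M : Fin d → Fin d → ℝ) : ℝ := Real.sqrt (∑ i, ∑ j, (M i j) ^ 2)

/-- Euclidean dot product on `ℝ^d`. -/
def dotP {d : ℕ} (v w : Fin d → ℝ) : ℝ := ∑ i, v i * w i

/-- `HolderBnd α u K` expresses that the Hölder norm `‖u‖_{C^{0,α}(𝕋^d)}`, i.e. the sup
norm plus the `α`-Hölder seminorm with respect to the torus metric, is at most `K`. -/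
def HolderBnd {d : ℕ} (α : ℝ) (u : (Fin d → ℝ) → ℝ) (K : ℝ) : Prop :=
  ∃ A B : ℝ, 0 ≤ A ∧ 0 ≤ B ∧ A + B ≤ K ∧ (∀ x, |u x| ≤ A) ∧
    ∀ x y, |u x - u y| ≤ B * tdist x y ^ α

/-- Hölder norm bound for an `ℝ^d`-valued function, with the Euclidean norm on values. -/
def HolderBndVec {d : ℕ} (α : ℝ) (G : (Fin d → ℝ) → Fin d → ℝ) (K : ℝ) : Prop :=
  ∃ A B : ℝ, 0 ≤ A ∧ 0 ≤ B ∧ A + B ≤ K ∧ (∀ x, euclNorm (G x) ≤ A) ∧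
    ∀ x y, euclNorm (G x - G y) ≤ B * tdist x y ^ α

/-- Hölder norm bound for a matrix-valued function. -/
def HolderBndMat {d : ℕ} (α : ℝ) (M : (Fin d → ℝ) → Fin d → Fin d → ℝ) (K : ℝ) : Prop :=
  ∃ A B : ℝ, 0 ≤ A ∧ 0 ≤ B ∧ A + B ≤ K ∧ (∀ x, frobNorm (M x) ≤ A) ∧
    ∀ x y, frobNorm (M x - M y) ≤ B * tdist x y ^ α

/-- `C1Bnd α u K` expresses `‖u‖_{C^{1,α}(𝕋^d)} ≤ K` (the `C^{0,α}` norm of `u` plus the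
`C^{0,α}` norm of its gradient is at most `K`). -/
def C1Bnd {d : ℕ} (α : ℝ) (u : (Fin d → ℝ) → ℝ) (K : ℝ) : Prop :=
  ∃ K₀ K₁ : ℝ, 0 ≤ K₀ ∧ 0 ≤ K₁ ∧ K₀ + K₁ ≤ K ∧
    HolderBnd α u K₀ ∧ HolderBndVec α (grad u) K₁

/-- `C2Bnd α u K` expresses that the second derivatives of `u` are `α`-Hölder continuous
and `‖u‖_{C^{2,α}(𝕋^d)} ≤ K`. -/
def C2Bnd {d : ℕ} (α : ℝ) (u : (Fin d → ℝ) → ℝ) (K : ℝ) : Prop :=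
  ∃ K₀ K₁ K₂ : ℝ, 0 ≤ K₀ ∧ 0 ≤ K₁ ∧ 0 ≤ K₂ ∧ K₀ + K₁ + K₂ ≤ K ∧
    HolderBnd α u K₀ ∧ HolderBndVec α (grad u) K₁ ∧ HolderBndMat α (hess u) K₂

/-- A coupling of two measures: a measure on the product whose marginals are `μ` and `ν`. -/
def IsCoupling {X : Type*} [MeasurableSpace X] (cpl : Measure (X × X)) (μ ν : Measure X) : Prop :=
  cpl.map Prod.fst = μ ∧ cpl.map Prod.snd = ν

/-- `W_q^q`: the `q`-th power of the Wasserstein distance of order `q` on the torus,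
defined as the infimum over couplings of the integral of the `q`-th power of the torus
distance. -/
def WassPow {d : ℕ} (q : ℝ) (μ ν : Measure (Fin d → ℝ)) : ℝ :=
  sInf { c | ∃ cpl : Measure ((Fin d → ℝ) × (Fin d → ℝ)), IsProbabilityMeasure cpl ∧
    IsCoupling cpl μ ν ∧ c = ∫ z, tdist z.1 z.2 ^ q ∂cpl }

/-- The Wasserstein distance of order `p` on the torus. -/
def Wass {d : ℕ} (p : ℝ) (μ ν : Measure (Fin d → ℝ)) : ℝ :=
  sInf { c | ∃ cpl : Measure ((Fin d → ℝ) × (Fin d → ℝ)), IsProbabilityMeasure cpl ∧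
    IsCoupling cpl μ ν ∧ c = (∫ z, tdist z.1 z.2 ^ p ∂cpl) ^ (1/p) }

/-- The measure `h dx` on the torus associated to a density `h`. -/
def densMeasure {d : ℕ} (h : (Fin d → ℝ) → ℝ) : Measure (Fin d → ℝ) :=
  (torusMeasure d).withDensity fun x => ENNReal.ofReal (h x)

/-- The `L^p(𝕋^d)` norm (as a real number). -/
def LpNorm {d : ℕ} (p : ℝ≥0∞) (u : (Fin d → ℝ) → ℝ) : ℝ :=
  (eLpNorm u p (torusMeasure d)).toReal

/-- `U` is a weak solution of `ε² Δ U = g` on the torus: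
`ε² ∫ ∇U·∇φ dx = −∫ g φ dx` for every smooth (periodic) test function `φ`. -/
def IsWeakPoisson {d : ℕ} (ε : ℝ) (U g : (Fin d → ℝ) → ℝ) : Prop :=
  ∀ φ : (Fin d → ℝ) → ℝ, ContDiff ℝ (⊤ : ℕ∞) φ → ZPeriodic φ →
    ε ^ 2 * ∫ x, dotP (grad U x) (grad φ x) ∂(torusMeasure d) =
      - ∫ x, g x * φ x ∂(torusMeasure d)

end
noncomputable section

/-- The rescaled mollifier `χ_r(x) = r^{-d} χ(x/r)` on `ℝ^d`. -/
def scaledMollifier {d : ℕ} (χ : (Fin d → ℝ) → ℝ) (r : ℝ) (x : Fin d → ℝ) : ℝ :=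
  (r ^ d)⁻¹ * χ (fun i => x i / r)

/-- The `ℤ^d`-periodisation of a function on `ℝ^d`, giving a function on the torus. -/
def periodised {d : ℕ} (g : (Fin d → ℝ) → ℝ) (x : Fin d → ℝ) : ℝ :=
  ∑' k : Fin d → ℤ, g (x + latVec k)

/-- The measure `χ_r ∗ μ` on the torus: the measure with density
`x ↦ ∫ χ_r(x − y) dμ(y)` with respect to the Haar measure (with `χ_r` periodised). -/
def mollifyMeasure {d : ℕ} (χ : (Fin d → ℝ) → ℝ) (r : ℝ) (μ : Measure (Fin d → ℝ)) :
    Measure (Fin d → ℝ) :=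
  (torusMeasure d).withDensity fun x =>
    ENNReal.ofReal (∫ y, periodised (scaledMollifier χ r) (x - y) ∂μ)

/-- A Borel probability measure on the torus `𝕋^d`, realised as a probability measure on
`ℝ^d` carried by the fundamental domain. -/
def IsTorusProb {d : ℕ} (μ : Measure (Fin d → ℝ)) : Prop :=
  IsProbabilityMeasure μ ∧ μ (Tcube d)ᶜ = 0

/-- The set `A_d` of allowed Hölder exponents: `(0,1)` if `d = 2`, `(0,1/5]` if `d = 3`. -/
def Aset (d : ℕ) : Set ℝ := if d = 2 then Set.Ioo 0 1 else Set.Ioc 0 (1/5)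

end

/-!
In dimension `d` the ball of radius `r` on the torus has measure at most `(2r)^d`, so the kernel
`1/d(x,·)` lies in weak `L^d`. Cut such a kernel `g` at a height `T`. By the layer-cake formula the
part above `T` has integral `O(T^{1-d})` and is paired with the sup norm, while the truncation
`min(g, T)` just fails to be bounded in `L^d` uniformly in `T`: the integral of its `d`-th power is
`1 + O(log T)`, and it is paired with the norm in the conjugate exponent by Hölder's inequality.
Cutting at `T = M`, that is at distance `l = 1/M`, makes the near part `O(1)`.
-/

/-- Weak-`L^p` (Marcinkiewicz) bound with constant `A` for a nonnegative function `g`: Chebyshev's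
tail bound for `g` in `L^p`, also satisfied by critical kernels such as `|x|^{-d/p}` on `ℝ^d`. The
tail is one-sided, so nonnegativity is a separate hypothesis wherever it matters. -/
def WeakLpBound {α : Type*} [MeasurableSpace α] (g : α → ℝ) (p : ℝ) (A : ℝ≥0∞)
    (μ : Measure α) : Prop :=
  ∀ t : ℝ, 0 < t → μ {y | t ≤ g y} ≤ A * ENNReal.ofReal (t ^ (-p))

section PowerIntegrals

lemma lintegral_Ioc_one_inv {T : ℝ} (hT : 1 ≤ T) :
    ∫⁻ t in Ioc 1 T, ENNReal.ofReal t⁻¹ = ENNReal.ofReal (log T) := by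
  have hint : IntervalIntegrable (fun t : ℝ => t⁻¹) volume 1 T :=
    intervalIntegrable_inv_iff.2 <| .inr <| notMem_uIcc_of_lt one_pos (one_pos.trans_le hT)
  have hpos : 0 ≤ᵐ[volume.restrict (Ioc 1 T)] fun t : ℝ => t⁻¹ :=
    (ae_restrict_iff' measurableSet_Ioc).2 <| ae_of_all _ fun t ht =>
      inv_nonneg.2 (zero_le_one.trans ht.1.le)
  rw [← ofReal_integral_eq_lintegral_ofReal hint.1 hpos, ← intervalIntegral.integral_of_le hT,
    integral_inv_of_pos one_pos (one_pos.trans_le hT), div_one]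

lemma lintegral_Ioi_rpow_neg {p T : ℝ} (hp : 1 < p) (hT : 0 < T) :
    ∫⁻ t in Ioi T, ENNReal.ofReal (t ^ (-p)) = ENNReal.ofReal (T ^ (1 - p) / (p - 1)) := by
  have hpos : 0 ≤ᵐ[volume.restrict (Ioi T)] fun t : ℝ => t ^ (-p) :=
    (ae_restrict_iff' measurableSet_Ioi).2 <| ae_of_all _ fun t ht =>
      rpow_nonneg (hT.trans ht).le _
  rw [← ofReal_integral_eq_lintegral_ofReal (integrableOn_Ioi_rpow_of_lt (by linarith) hT) hpos,
    integral_Ioi_rpow_of_lt (by linarith) hT, neg_div, ← div_neg, neg_add_eq_sub, neg_sub]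

end PowerIntegrals

namespace WeakLpBound

variable {α : Type*} [MeasurableSpace α] {μ : Measure α} {f g : α → ℝ} {p T : ℝ} {A : ℝ≥0∞}

lemma mono (hg : WeakLpBound g p A μ) (hfg : f ≤ g) : WeakLpBound f p A μ := fun t ht =>
  (measure_mono fun y (hy : t ≤ f y) => hy.trans (hfg y)).trans (hg t ht)

lemma rpow (hg : WeakLpBound g p A μ) (hg0 : 0 ≤ g) {s : ℝ} (hs : 0 < s) :
    WeakLpBound (fun y => g y ^ s) (p / s) A μ := by
  intro t ht
  have hset : {y | t ≤ g y ^ s} = {y | t ^ s⁻¹ ≤ g y} := by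
    ext y
    exact (rpow_inv_le_iff_of_pos ht.le (hg0 y) hs).symm
  rw [hset]
  refine (hg _ (rpow_pos_of_pos ht _)).trans_eq ?_
  rw [← rpow_mul ht.le, mul_neg, inv_mul_eq_div]

lemma lintegral_le_of_le (hf : WeakLpBound f 1 A μ) (hfm : AEMeasurable f μ) (hf0 : 0 ≤ f)
    (hT : 1 ≤ T) (hfT : ∀ y, f y ≤ T) :
    ∫⁻ y, ENNReal.ofReal (f y) ∂μ ≤ μ univ + A * ENNReal.ofReal (log T) := by
  have hlow : ∫⁻ t in Ioc (0 : ℝ) 1, μ {y | t ≤ f y} ≤ μ univ :=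
    (setLIntegral_mono measurable_const fun t _ => measure_mono (subset_univ _)).trans_eq
      (by simp)
  have hmid : ∫⁻ t in Ioc 1 T, μ {y | t ≤ f y} ≤ A * ENNReal.ofReal (log T) := by
    rw [← lintegral_Ioc_one_inv hT, ← lintegral_const_mul _ (by fun_prop)]
    refine setLIntegral_mono (by fun_prop) fun t ht => ?_
    rw [← rpow_neg_one]
    exact hf t (one_pos.trans ht.1)
  have hhigh : ∫⁻ t in Ioi T, μ {y | t ≤ f y} = 0 := by
    refine setLIntegral_eq_zero measurableSet_Ioi fun t ht => ?_
    have hempty : {y | t ≤ f y} = ∅ :=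
      eq_empty_of_forall_notMem fun y hy => (hfT y).not_gt (ht.trans_le hy)
    simp [hempty]
  rw [lintegral_eq_lintegral_meas_le μ (ae_of_all _ hf0) hfm, ← Ioc_union_Ioi_eq_Ioi zero_le_one,
    ← Ioc_union_Ioi_eq_Ioi hT]
  refine (lintegral_union_le _ _ _).trans (add_le_add hlow ((lintegral_union_le _ _ _).trans ?_))
  rwa [hhigh, add_zero]

lemma lintegral_min_rpow_le (hg : WeakLpBound g p A μ) (hgm : AEMeasurable g μ) (hg0 : 0 ≤ g)
    (hp : 0 < p) (hT : 1 ≤ T) :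
    ∫⁻ y, ENNReal.ofReal (min (g y) T ^ p) ∂μ ≤ μ univ + A * ENNReal.ofReal (p * log T) := by
  have hmin0 : 0 ≤ fun y => min (g y) T := fun y => le_min (hg0 y) (zero_le_one.trans hT)
  have hweak : WeakLpBound (fun y => min (g y) T ^ p) 1 A μ := by
    simpa only [div_self hp.ne'] using
      (hg.mono (f := fun y => min (g y) T) fun y => min_le_left _ _).rpow hmin0 hp
  rw [← log_rpow (one_pos.trans_le hT)]
  exact hweak.lintegral_le_of_le ((hgm.min aemeasurable_const).pow_const p)
    (fun y => rpow_nonneg (hmin0 y) _) (one_le_rpow hT hp.le)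
    fun y => rpow_le_rpow (hmin0 y) (min_le_right _ _) hp.le

lemma setLIntegral_ge_le (hg : WeakLpBound g p A μ) (hgm : AEMeasurable g μ) (hg0 : 0 ≤ g)
    (hp : 1 < p) (hT : 0 < T) :
    ∫⁻ y in {y | T ≤ g y}, ENNReal.ofReal (g y) ∂μ ≤
      A * ENNReal.ofReal (p / (p - 1) * T ^ (1 - p)) := by
  set ν := μ.restrict {y | T ≤ g y}
  have hlow : ∫⁻ t in Ioc 0 T, ν {y | t ≤ g y} ≤ A * ENNReal.ofReal (T ^ (1 - p)) := by
    have htail : ∀ t ∈ Ioc 0 T, ν {y | t ≤ g y} ≤ A * ENNReal.ofReal (T ^ (-p)) := fun t _ =>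
      (measure_mono (subset_univ _)).trans (Measure.restrict_apply_univ _ |>.trans_le (hg T hT))
    refine (setLIntegral_mono measurable_const htail).trans_eq ?_
    rw [setLIntegral_const, volume_Ioc, sub_zero, mul_assoc, ← ENNReal.ofReal_mul (by positivity),
      ← rpow_add_one hT.ne', neg_add_eq_sub]
  have hhigh : ∫⁻ t in Ioi T, ν {y | t ≤ g y} ≤ A * ENNReal.ofReal (T ^ (1 - p) / (p - 1)) := by
    rw [← lintegral_Ioi_rpow_neg hp hT, ← lintegral_const_mul _ (by fun_prop)]
    exact setLIntegral_mono (by fun_prop) fun t ht =>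
      (Measure.restrict_apply_le _ _).trans (hg t (hT.trans ht))
  have hp' : 0 < p - 1 := sub_pos.2 hp
  rw [lintegral_eq_lintegral_meas_le ν (ae_of_all _ hg0) hgm.restrict,
    ← Ioc_union_Ioi_eq_Ioi hT.le]
  refine ((lintegral_union_le _ _ _).trans (add_le_add hlow hhigh)).trans_eq ?_
  rw [← mul_add, ← ENNReal.ofReal_add (by positivity) (by positivity)]
  congr 2
  field_simp
  ring

section Interpolation

variable {E : Type*} [NormedAddCommGroup E] {u : α → E}

lemma setLIntegral_enorm_mul_ge_le (hg : WeakLpBound g p A μ) (hgm : AEMeasurable g μ)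
    (hg0 : 0 ≤ g) (hp : 1 < p) (hT : 0 < T) :
    ∫⁻ y in {y | T ≤ g y}, ‖u y‖ₑ * ENNReal.ofReal (g y) ∂μ ≤
      eLpNorm u ⊤ μ * (A * ENNReal.ofReal (p / (p - 1) * T ^ (1 - p))) := by
  calc ∫⁻ y in {y | T ≤ g y}, ‖u y‖ₑ * ENNReal.ofReal (g y) ∂μ
      ≤ ∫⁻ y in {y | T ≤ g y}, eLpNorm u ⊤ μ * ENNReal.ofReal (g y) ∂μ := by
        refine lintegral_mono_ae (ae_restrict_of_ae ?_)
        filter_upwards [enorm_ae_le_eLpNormEssSup u μ] with y hy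
        rw [eLpNorm_exponent_top]
        gcongr
    _ = eLpNorm u ⊤ μ * ∫⁻ y in {y | T ≤ g y}, ENNReal.ofReal (g y) ∂μ :=
        lintegral_const_mul'' _ hgm.ennreal_ofReal.restrict
    _ ≤ eLpNorm u ⊤ μ * (A * ENNReal.ofReal (p / (p - 1) * T ^ (1 - p))) := by
        gcongr
        exact hg.setLIntegral_ge_le hgm hg0 hp hT

lemma lintegral_enorm_mul_min_le (hg : WeakLpBound g p A μ) (hgm : AEMeasurable g μ)
    (hg0 : 0 ≤ g) {q : ℝ} (hpq : p.HolderConjugate q) (hu : AEStronglyMeasurable u μ)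
    (hT : 1 ≤ T) :
    ∫⁻ y, ‖u y‖ₑ * ENNReal.ofReal (min (g y) T) ∂μ ≤
      eLpNorm u (ENNReal.ofReal q) μ *
        (μ univ + A * ENNReal.ofReal (p * log T)) ^ (1 / p) := by
  have hq := hpq.symm.pos
  have hpow : ∀ y, ENNReal.ofReal (min (g y) T) ^ p = ENNReal.ofReal (min (g y) T ^ p) := fun y =>
    ENNReal.ofReal_rpow_of_nonneg (le_min (hg0 y) (zero_le_one.trans hT)) hpq.nonneg
  refine (ENNReal.lintegral_mul_le_Lp_mul_Lq μ hpq.symm hu.enorm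
    (hgm.min aemeasurable_const).ennreal_ofReal).trans ?_
  rw [eLpNorm_eq_lintegral_rpow_enorm_toReal (ENNReal.ofReal_pos.2 hq).ne' ENNReal.ofReal_ne_top,
    ENNReal.toReal_ofReal hq.le]
  simp only [hpow]
  gcongr
  · exact one_div_nonneg.2 hpq.nonneg
  · exact hg.lintegral_min_rpow_le hgm hg0 hpq.pos hT

theorem lintegral_enorm_mul_le (hg : WeakLpBound g p A μ) (hgm : AEMeasurable g μ)
    (hg0 : 0 ≤ g) {q : ℝ} (hpq : p.HolderConjugate q) (hu : AEStronglyMeasurable u μ)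
    (hT : 1 ≤ T) :
    ∫⁻ y, ‖u y‖ₑ * ENNReal.ofReal (g y) ∂μ ≤
      eLpNorm u ⊤ μ * (A * ENNReal.ofReal (q * T ^ (1 - p))) +
        eLpNorm u (ENNReal.ofReal q) μ *
          (μ univ + A * ENNReal.ofReal (p * log T)) ^ (1 / p) := by
  have hsplit : ∀ y, ‖u y‖ₑ * ENNReal.ofReal (g y) ≤
      {y | T ≤ g y}.indicator (fun y => ‖u y‖ₑ * ENNReal.ofReal (g y)) y +
        ‖u y‖ₑ * ENNReal.ofReal (min (g y) T) := by
    intro y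
    rcases le_total T (g y) with h | h
    · rw [indicator_of_mem (show y ∈ {y | T ≤ g y} from h)]
      exact le_self_add
    · rw [min_eq_left h]
      exact le_add_self
  have hmin : AEMeasurable (fun y => ‖u y‖ₑ * ENNReal.ofReal (min (g y) T)) μ :=
    hu.enorm.mul (hgm.min aemeasurable_const).ennreal_ofReal
  refine (lintegral_mono hsplit).trans ?_
  rw [lintegral_add_right' _ hmin]
  refine add_le_add ((lintegral_indicator_le _ _).trans ?_) ?_
  · rw [hpq.conjugate_eq]
    exact hg.setLIntegral_enorm_mul_ge_le hgm hg0 hpq.lt (one_pos.trans_le hT)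
  · exact hg.lintegral_enorm_mul_min_le hgm hg0 hpq hu hT

end Interpolation

end WeakLpBound

section TorusDistance

variable {d : ℕ}

instance isProbabilityMeasure_torusMeasure : IsProbabilityMeasure (torusMeasure d) :=
  ⟨by simp [torusMeasure, Tcube, volume_pi_pi]⟩

lemma euclNorm_nonneg (v : Fin d → ℝ) : 0 ≤ euclNorm v := sqrt_nonneg _

lemma abs_apply_le_euclNorm (v : Fin d → ℝ) (i : Fin d) : |v i| ≤ euclNorm v :=
  abs_le_sqrt (Finset.single_le_sum (f := fun j => v j ^ 2) (fun _ _ => sq_nonneg _)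
    (Finset.mem_univ i))

lemma tdist_nonneg (x y : Fin d → ℝ) : 0 ≤ tdist x y := Real.iInf_nonneg fun _ => euclNorm_nonneg _

lemma measurable_tdist (x : Fin d → ℝ) : Measurable (tdist x) := by
  unfold tdist euclNorm
  fun_prop

lemma norm_coe_sub_le_tdist (x y : Fin d → ℝ) (i : Fin d) :
    ‖((x i - y i : ℝ) : UnitAddCircle)‖ ≤ tdist x y := by
  refine le_ciInf fun k => ?_
  calc ‖((x i - y i : ℝ) : UnitAddCircle)‖ ≤ |x i - y i - ((-k i : ℤ) : ℝ)| := by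
        rw [UnitAddCircle.norm_eq]
        exact round_le _ _
    _ = |(x - y + latVec k) i| := by simp [latVec]
    _ ≤ euclNorm (x - y + latVec k) := abs_apply_le_euclNorm _ i

lemma volume_Ico_norm_coe_sub_le (a r : ℝ) :
    volume.restrict (Ico (0 : ℝ) 1) {t | ‖((a - t : ℝ) : UnitAddCircle)‖ ≤ r} ≤
      ENNReal.ofReal (2 * r) := by
  have hpre : {t : ℝ | ‖((a - t : ℝ) : UnitAddCircle)‖ ≤ r} =
      QuotientAddGroup.mk ⁻¹' Metric.closedBall (a : UnitAddCircle) r := by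
    ext t
    rw [mem_preimage, Metric.mem_closedBall', dist_eq_norm]
    rfl
  have hmk := UnitAddCircle.measurePreserving_mk 0
  rw [zero_add] at hmk
  rw [hpre, restrict_Ico_eq_restrict_Ioc,
    hmk.measure_preimage measurableSet_closedBall.nullMeasurableSet, AddCircle.volume_closedBall]
  exact ENNReal.ofReal_le_ofReal (min_le_right _ _)

lemma torusMeasure_tdist_le (x : Fin d → ℝ) (r : ℝ) :
    torusMeasure d {y | tdist x y ≤ r} ≤ ENNReal.ofReal (2 * r) ^ d := by
  have hbox : {y | tdist x y ≤ r} ⊆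
      univ.pi fun i => {t | ‖((x i - t : ℝ) : UnitAddCircle)‖ ≤ r} :=
    fun y hy i _ => (norm_coe_sub_le_tdist x y i).trans hy
  have hpi : torusMeasure d = Measure.pi fun _ => volume.restrict (Ico (0 : ℝ) 1) :=
    Measure.restrict_pi_pi _ _
  calc torusMeasure d {y | tdist x y ≤ r}
      ≤ torusMeasure d (univ.pi fun i => {t | ‖((x i - t : ℝ) : UnitAddCircle)‖ ≤ r}) :=
        measure_mono hbox
    _ = ∏ i, volume.restrict (Ico (0 : ℝ) 1) {t | ‖((x i - t : ℝ) : UnitAddCircle)‖ ≤ r} := by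
        rw [hpi, Measure.pi_pi]
    _ ≤ ∏ _i : Fin d, ENNReal.ofReal (2 * r) :=
        Finset.prod_le_prod' fun i _ => volume_Ico_norm_coe_sub_le (x i) r
    _ = ENNReal.ofReal (2 * r) ^ d := by simp

lemma weakLpBound_inv_tdist (x : Fin d → ℝ) :
    WeakLpBound (fun y => (tdist x y)⁻¹) d (2 ^ d) (torusMeasure d) := by
  intro t ht
  have hsub : {y | t ≤ (tdist x y)⁻¹} ⊆ {y | tdist x y ≤ t⁻¹} := fun y hy =>
    (le_inv_comm₀ ht (inv_pos.1 (ht.trans_le hy))).1 hy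
  refine ((measure_mono hsub).trans (torusMeasure_tdist_le x t⁻¹)).trans_eq ?_
  rw [ENNReal.ofReal_mul zero_le_two, mul_pow, ENNReal.ofReal_ofNat,
    ← ENNReal.ofReal_pow (by positivity), rpow_neg ht.le, rpow_natCast, inv_pow]

lemma one_add_rpow_one_div_le_ofReal {d : ℕ} (hd : 1 ≤ d) {b : ℝ} (hb : 0 ≤ b) :
    (1 + 2 ^ d * ENNReal.ofReal (d * b)) ^ (1 / (d : ℝ)) ≤
      ENNReal.ofReal (1 + (2 ^ d * d : ℝ) ^ (1 / (d : ℝ)) * b ^ (1 / (d : ℝ))) := by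
  have hd' : 1 / (d : ℝ) ≤ 1 := (div_le_one₀ (by positivity)).2 (by exact_mod_cast hd)
  rw [← mul_rpow (by positivity) hb, ENNReal.ofReal_add zero_le_one (by positivity), mul_assoc,
    ENNReal.ofReal_one, ← ENNReal.ofReal_rpow_of_nonneg (by positivity) (by positivity),
    ENNReal.ofReal_mul (p := 2 ^ d) (by positivity), ENNReal.ofReal_pow zero_le_two,
    ENNReal.ofReal_ofNat]
  simpa only [ENNReal.one_rpow] using ENNReal.rpow_add_le_add_rpow 1 _ (by positivity) hd'

theorem lintegral_enorm_mul_inv_tdist_le {E : Type*} [NormedAddCommGroup E]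
    {u : (Fin d → ℝ) → E} (hu : AEStronglyMeasurable u (torusMeasure d)) {q T : ℝ}
    (hdq : (d : ℝ).HolderConjugate q) (hT : 1 ≤ T) (x : Fin d → ℝ) :
    ∫⁻ y, ‖u y‖ₑ * ENNReal.ofReal (tdist x y)⁻¹ ∂torusMeasure d ≤
      eLpNorm u ⊤ (torusMeasure d) * ENNReal.ofReal (2 ^ d * (q * T ^ (1 - (d : ℝ)))) +
        eLpNorm u (ENNReal.ofReal q) (torusMeasure d) *
          ENNReal.ofReal (1 + (2 ^ d * d : ℝ) ^ (1 / (d : ℝ)) * log T ^ (1 / (d : ℝ))) := by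
  refine ((weakLpBound_inv_tdist x).lintegral_enorm_mul_le (measurable_tdist x).inv.aemeasurable
    (fun y => inv_nonneg.2 (tdist_nonneg x y)) hdq hu hT).trans ?_
  rw [measure_univ, ENNReal.ofReal_mul (p := 2 ^ d) (by positivity),
    ENNReal.ofReal_pow zero_le_two, ENNReal.ofReal_ofNat]
  gcongr
  exact one_add_rpow_one_div_le_ofReal (Nat.one_lt_cast.1 hdq.lt).le (log_nonneg hT)

end TorusDistance

section DensityEstimate

lemma eLpNorm_sub_const_le {α E : Type*} [MeasurableSpace α] {μ : Measure α}
    [IsProbabilityMeasure μ] [NormedAddCommGroup E] {f : α → E} (hf : AEStronglyMeasurable f μ)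
    {p : ℝ≥0∞} (hp : 1 ≤ p) (c : E) :
    eLpNorm (fun y => f y - c) p μ ≤ eLpNorm f p μ + ‖c‖ₑ := by
  refine (eLpNorm_sub_le hf aestronglyMeasurable_const hp).trans_eq ?_
  rw [eLpNorm_const c (one_pos.trans_le hp).ne' (IsProbabilityMeasure.ne_zero μ), measure_univ,
    ENNReal.one_rpow, mul_one]

lemma integrable_and_integral_le_of_lintegral_le {α : Type*} [MeasurableSpace α] {μ : Measure α}
    {f : α → ℝ} (hf : AEStronglyMeasurable f μ) (hf0 : 0 ≤ f) {B : ℝ} (hB : 0 ≤ B)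
    (hfB : ∫⁻ y, ENNReal.ofReal (f y) ∂μ ≤ ENNReal.ofReal B) :
    Integrable f μ ∧ ∫ y, f y ∂μ ≤ B := by
  refine ⟨⟨hf, (hasFiniteIntegral_iff_ofReal (ae_of_all _ hf0)).2
    (hfB.trans_lt ENNReal.ofReal_lt_top)⟩, ?_⟩
  rw [integral_eq_lintegral_of_nonneg_ae (ae_of_all _ hf0) hf]
  exact ENNReal.toReal_le_of_le_ofReal hB hfB

lemma mul_rpow_one_sub_le_one {M s : ℝ} (hM : 1 ≤ M) (hs : 2 ≤ s) : M * M ^ (1 - s) ≤ 1 := by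
  rw [mul_comm, ← rpow_add_one (one_pos.trans_le hM).ne']
  exact rpow_le_one_of_one_le_of_nonpos hM (by linarith)

lemma lintegral_abs_sub_one_div_tdist_le {d : ℕ} {q C₀ M : ℝ} (hdq : (d : ℝ).HolderConjugate q)
    (hC₀ : 0 ≤ C₀) (hM : 1 ≤ M) {ρ : (Fin d → ℝ) → ℝ}
    (hρ : AEStronglyMeasurable ρ (torusMeasure d))
    (hρq : eLpNorm ρ (ENNReal.ofReal q) (torusMeasure d) ≤ ENNReal.ofReal C₀)
    (hρM : eLpNorm ρ ⊤ (torusMeasure d) ≤ ENNReal.ofReal M) (x : Fin d → ℝ) :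
    ∫⁻ y, ENNReal.ofReal (|ρ y - 1| / tdist x y) ∂torusMeasure d ≤
      ENNReal.ofReal (2 ^ (d + 1) * q +
        (1 + C₀) * (1 + (2 ^ d * d : ℝ) ^ (1 / (d : ℝ)) * log M ^ (1 / (d : ℝ)))) := by
  have hq := hdq.symm.nonneg
  have hlog : 0 ≤ log M := log_nonneg hM
  have hd : (2 : ℝ) ≤ d := by exact_mod_cast Nat.succ_le_of_lt (Nat.one_lt_cast.1 hdq.lt)
  have hLq : eLpNorm (fun y => ρ y - 1) (ENNReal.ofReal q) (torusMeasure d) ≤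
      ENNReal.ofReal (1 + C₀) := by
    refine (eLpNorm_sub_const_le hρ (ENNReal.one_le_ofReal.2 hdq.symm.lt.le) 1).trans ?_
    rw [ENNReal.ofReal_add zero_le_one hC₀, add_comm, ENNReal.ofReal_one, enorm_one]
    gcongr
  have hLtop : eLpNorm (fun y => ρ y - 1) ⊤ (torusMeasure d) ≤ ENNReal.ofReal (2 * M) := by
    refine (eLpNorm_sub_const_le hρ le_top 1).trans ?_
    rw [two_mul, ENNReal.ofReal_add (by positivity) (by positivity), enorm_one]
    exact add_le_add hρM (ENNReal.one_le_ofReal.2 hM)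
  have hnear : 2 * M * (2 ^ d * (q * M ^ (1 - (d : ℝ)))) ≤ 2 ^ (d + 1) * q := by
    calc 2 * M * (2 ^ d * (q * M ^ (1 - (d : ℝ))))
        = 2 ^ (d + 1) * q * (M * M ^ (1 - (d : ℝ))) := by ring
      _ ≤ 2 ^ (d + 1) * q := mul_le_of_le_one_right (by positivity) (mul_rpow_one_sub_le_one hM hd)
  have hkernel : ∀ y, ENNReal.ofReal (|ρ y - 1| / tdist x y) =
      ‖ρ y - 1‖ₑ * ENNReal.ofReal (tdist x y)⁻¹ := fun y => by
    rw [div_eq_mul_inv, ENNReal.ofReal_mul (abs_nonneg _), Real.enorm_eq_ofReal_abs]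
  simp only [hkernel]
  refine (lintegral_enorm_mul_inv_tdist_le (hρ.sub aestronglyMeasurable_const) hdq hM x).trans ?_
  refine (add_le_add (mul_le_mul_left hLtop _) (mul_le_mul_left hLq _)).trans ?_
  rw [← ENNReal.ofReal_mul (by positivity), ← ENNReal.ofReal_mul (by positivity),
    ← ENNReal.ofReal_add (by positivity) (by positivity)]
  exact ENNReal.ofReal_le_ofReal (add_le_add_left hnear _)

theorem statement11_general {d : ℕ} {q : ℝ} (hdq : (d : ℝ).HolderConjugate q) :
    ∃ C : ℝ, 0 < C ∧
      ∀ C₀ M : ℝ, 0 ≤ C₀ → 1 ≤ M →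
      ∀ ρ : (Fin d → ℝ) → ℝ,
        AEStronglyMeasurable ρ (torusMeasure d) →
        eLpNorm ρ (ENNReal.ofReal q) (torusMeasure d) ≤ ENNReal.ofReal C₀ →
        eLpNorm ρ ⊤ (torusMeasure d) ≤ ENNReal.ofReal M →
        ∀ x, Integrable (fun y => |ρ y - 1| / tdist x y) (torusMeasure d) ∧
          (∫ y, |ρ y - 1| / tdist x y ∂(torusMeasure d)) ≤
            C * (1 + C₀) * (1 + log M ^ (1 / (d : ℝ))) := by
  have hq := hdq.symm.pos
  set a : ℝ := 2 ^ (d + 1) * q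
  set b : ℝ := (2 ^ d * d : ℝ) ^ (1 / (d : ℝ))
  refine ⟨a + 1 + b, by positivity, fun C₀ M hC₀ hM ρ hρ hρq hρM x => ?_⟩
  have hlog : 0 ≤ log M := log_nonneg hM
  set L := log M ^ (1 / (d : ℝ))
  have hL : 0 ≤ L := rpow_nonneg hlog _
  have hbound : a + (1 + C₀) * (1 + b * L) ≤ (a + 1 + b) * (1 + C₀) * (1 + L) := by
    have ha : a ≤ a * ((1 + C₀) * (1 + L)) :=
      le_mul_of_one_le_right (by positivity) (one_le_mul_of_one_le_of_one_le (by linarith)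
        (by linarith))
    have hb : 1 + b * L ≤ (1 + b) * (1 + L) := by nlinarith [show 0 ≤ b by positivity]
    nlinarith
  refine integrable_and_integral_le_of_lintegral_le ?_ ?_ (by positivity)
    ((lintegral_abs_sub_one_div_tdist_le hdq hC₀ hM hρ hρq hρM x).trans
      (ENNReal.ofReal_le_ofReal hbound))
  · exact ((hρ.sub aestronglyMeasurable_const).norm.aemeasurable.div
      (measurable_tdist x).aemeasurable).aestronglyMeasurable
  · exact fun y => div_nonneg (abs_nonneg _) (tdist_nonneg x y)

end DensityEstimate

/-- Interpolation estimate in dimension two: for a probability density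
`ρ` on `𝕋²` with `‖ρ‖_{L²} ≤ C₀` and `‖ρ‖_{L^∞} ≤ M`,
`sup_x ∫ |ρ(y) − 1|/d(x,y) dy ≤ C (1 + C₀)(1 + (log M)^{1/2})`. -/
theorem statement11 :
    ∃ C : ℝ, 0 < C ∧
      ∀ C₀ M : ℝ, 0 < C₀ → 2 ≤ M →
      ∀ ρ : (Fin 2 → ℝ) → ℝ,
        Measurable ρ → ZPeriodic ρ → (∀ x, 0 ≤ ρ x) →
        (∫ x, ρ x ∂(torusMeasure 2)) = 1 →
        eLpNorm ρ 2 (torusMeasure 2) ≤ ENNReal.ofReal C₀ →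
        eLpNorm ρ ⊤ (torusMeasure 2) ≤ ENNReal.ofReal M →
        ∀ x, (∫ y, |ρ y - 1| / tdist x y ∂(torusMeasure 2)) ≤
          C * (1 + C₀) * (1 + Real.sqrt (Real.log M)) := by
  obtain ⟨C, hC, hbound⟩ := statement11_general (d := 2) Real.HolderConjugate.two_two
  exact ⟨C, hC, fun C₀ M hC₀ hM ρ hρ _ _ _ hρ2 hρM x => by
    simpa [sqrt_eq_rpow] using (hbound C₀ M hC₀.le (by linarith) ρ hρ.aestronglyMeasurable
      (by simpa using hρ2) hρM x).2⟩
end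

section
/- Let d ≥ 1 be an integer and define H : (0,∞) → ℝ by H(x) = x ( log( x / (16 d) ) )² for 0 < x ≤ d, and H(x) = d ( log 16 )² for x > d. Then H is concave on (0,∞). -/
open MeasureTheory Real Set
open scoped ENNReal

/-!
`H` is `x ↦ x (log (x / (16 d)))²` precomposed with the truncation `x ↦ min x d`. With
`L = log (x / c)`, the function `x L²` has derivative `L (L + 2)` and second derivative
`2 (L + 1) / x`, so it is concave where `L ≤ -1` and nondecreasing where `L ≤ -2`. As `e² ≤ 16`,
both hold for `c = 16 d` on `(0, d]`, and a nondecreasing concave function of a concave function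
is concave.
-/

section Truncation

variable {𝕜 β : Type*} [Semiring 𝕜] [LinearOrder 𝕜] [IsStrictOrderedRing 𝕜]
  [AddCommMonoid β] [PartialOrder β] [SMul 𝕜 β]

lemma concaveOn_comp_min {s : Set 𝕜} {f : 𝕜 → β} {a : 𝕜} (hs : Convex 𝕜 s) (ha : a ∈ s)
    (hf : ConcaveOn 𝕜 (s ∩ Iic a) f) (hf' : MonotoneOn f (s ∩ Iic a)) :
    ConcaveOn 𝕜 s fun x => f (min x a) := by
  have image_eq : (fun x => min x a) '' s = s ∩ Iic a := by
    refine Subset.antisymm (image_subset_iff.2 fun x hx => ⟨?_, min_le_right x a⟩)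
      fun x hx => ⟨x, hx.1, min_eq_left hx.2⟩
    exact min_rec' (· ∈ s) hx ha
  have min_concave : ConcaveOn 𝕜 s fun x => min x a :=
    (concaveOn_id hs).inf (concaveOn_const a hs)
  rw [← image_eq] at hf hf'
  exact hf.comp min_concave hf'

end Truncation

section MulLogSq

variable {c x : ℝ}

lemma hasDerivAt_log_div (hc : c ≠ 0) (hx : x ≠ 0) :
    HasDerivAt (fun y => log (y / c)) x⁻¹ x := by
  refine (((hasDerivAt_id' x).div_const c).log (div_ne_zero hx hc)).congr_deriv ?_
  field_simp

lemma hasDerivAt_mul_log_div_sq (hc : c ≠ 0) (hx : x ≠ 0) :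
    HasDerivAt (fun y => y * log (y / c) ^ 2) (log (x / c) * (log (x / c) + 2)) x := by
  refine ((hasDerivAt_id' x).mul ((hasDerivAt_log_div hc hx).fun_pow 2)).congr_deriv ?_
  field_simp
  ring

lemma hasDerivAt_log_div_mul_log_div_add_two (hc : c ≠ 0) (hx : x ≠ 0) :
    HasDerivAt (fun y => log (y / c) * (log (y / c) + 2)) (2 * (log (x / c) + 1) / x) x := by
  have hlog := hasDerivAt_log_div hc hx
  refine (hlog.mul (hlog.add_const 2)).congr_deriv ?_
  ring

lemma continuousOn_mul_log_div_sq (hc : c ≠ 0) :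
    ContinuousOn (fun y => y * log (y / c) ^ 2) {0}ᶜ := fun _ hy =>
  (hasDerivAt_mul_log_div_sq hc hy).continuousAt.continuousWithinAt

lemma log_div_le_neg {a : ℝ} (hc : 0 < c) (hx : 0 < x) (hxa : x ≤ c / exp a) :
    log (x / c) ≤ -a := by
  rwa [log_le_iff_le_exp (div_pos hx hc), div_le_iff₀ hc, exp_neg, inv_mul_eq_div]

lemma concaveOn_mul_log_div_sq (hc : 0 < c) :
    ConcaveOn ℝ (Ioc 0 (c / exp 1)) fun y => y * log (y / c) ^ 2 := by
  refine concaveOn_of_hasDerivWithinAt2_nonpos (convex_Ioc _ _)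
    ((continuousOn_mul_log_div_sq hc.ne').mono fun y hy => hy.1.ne')
    (f' := fun y => log (y / c) * (log (y / c) + 2)) (f'' := fun y => 2 * (log (y / c) + 1) / y)
    (fun y hy => ?_) (fun y hy => ?_) fun y hy => ?_
  all_goals obtain ⟨hy_pos, hy_le⟩ := interior_subset hy
  · exact (hasDerivAt_mul_log_div_sq hc.ne' hy_pos.ne').hasDerivWithinAt
  · exact (hasDerivAt_log_div_mul_log_div_add_two hc.ne' hy_pos.ne').hasDerivWithinAt
  · have hlog : log (y / c) ≤ -1 := log_div_le_neg hc hy_pos hy_le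
    exact div_nonpos_of_nonpos_of_nonneg (by linarith) hy_pos.le

lemma monotoneOn_mul_log_div_sq (hc : 0 < c) :
    MonotoneOn (fun y => y * log (y / c) ^ 2) (Ioc 0 (c / exp 2)) := by
  refine monotoneOn_of_hasDerivWithinAt_nonneg (convex_Ioc _ _)
    ((continuousOn_mul_log_div_sq hc.ne').mono fun y hy => hy.1.ne')
    (f' := fun y => log (y / c) * (log (y / c) + 2)) (fun y hy => ?_) fun y hy => ?_
  all_goals obtain ⟨hy_pos, hy_le⟩ := interior_subset hy
  · exact (hasDerivAt_mul_log_div_sq hc.ne' hy_pos.ne').hasDerivWithinAt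
  · have hlog : log (y / c) ≤ -2 := log_div_le_neg hc hy_pos hy_le
    exact mul_nonneg_of_nonpos_of_nonpos (by linarith) (by linarith)

lemma concaveOn_min_mul_log_min_div_sq {d : ℝ} (hd : 0 < d) (hdc : d ≤ c / exp 2) :
    ConcaveOn ℝ (Ioi 0) fun y => min y d * log (min y d / c) ^ 2 := by
  have hc : 0 < c := (div_pos_iff_of_pos_right (exp_pos 2)).1 (hd.trans_le hdc)
  have exp_le : c / exp 2 ≤ c / exp 1 := by gcongr; norm_num
  exact concaveOn_comp_min (f := fun y => y * log (y / c) ^ 2) (convex_Ioi 0) hd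
    ((concaveOn_mul_log_div_sq hc).subset (Ioc_subset_Ioc_right (hdc.trans exp_le))
      (convex_Ioc 0 d))
    ((monotoneOn_mul_log_div_sq hc).mono (Ioc_subset_Ioc_right hdc))

end MulLogSq

lemma exp_two_le_sixteen : exp 2 ≤ 16 := by
  calc exp 2 = exp 1 ^ 2 := by rw [← exp_nat_mul]; norm_num
    _ ≤ 3 ^ 2 := by gcongr; exact exp_one_lt_three.le
    _ ≤ 16 := by norm_num

theorem statement12_general {K d : ℝ} (hK : exp 2 ≤ K) (hd : 0 < d) :
    ConcaveOn ℝ (Ioi 0) fun x => if x ≤ d then x * log (x / (K * d)) ^ 2 else d * log K ^ 2 := by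
  have hdK : d ≤ K * d / exp 2 := by
    rw [le_div_iff₀ (exp_pos 2), mul_comm]
    gcongr
  refine (concaveOn_min_mul_log_min_div_sq hd hdK).congr fun x _ => ?_
  rcases le_or_gt x d with hxd | hdx
  · simp only [min_eq_left hxd, if_pos hxd]
  · have log_eq : log (d / (K * d)) = -log K := by
      rw [div_mul_cancel_right₀ hd.ne', log_inv]
    simp only [min_eq_right hdx.le, if_neg hdx.not_ge, log_eq, neg_sq]

/-- The function `H(x) = x (log(x/(16d)))²` for `0 < x ≤ d`,
`H(x) = d (log 16)²` for `x > d`, is concave on `(0,∞)`. -/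
theorem statement12 (d : ℕ) (hd : 1 ≤ d) :
    ConcaveOn ℝ (Set.Ioi (0:ℝ))
      (fun x : ℝ => if x ≤ d then x * (Real.log (x / (16 * d))) ^ 2
        else d * (Real.log 16) ^ 2) :=
  statement12_general exp_two_le_sixteen (Nat.cast_pos.2 hd)
end

section
/- Let d ≥ 1, C > 0, T > 0, and let D : [0,T] → (0,∞) be differentiable with D(t) ≤ d for all t ∈ [0,T] and D′(t) ≤ C D(t) ( 1 + log( 16 d / D(t) ) ) for all t ∈ [0,T]. Then for all t ∈ [0,T], D(t) ≤ 16 d · exp[ 1 − ( 1 + log( 16 d / D(0) ) ) e^{−C t} ]. -/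
open MeasureTheory Real Set
open scoped ENNReal

/-! Since `1 + log (K / D) = (1 + log K) - log D`, dividing the hypothesis by `D > 0` turns it into
the affine inequality `u' ≤ C (A - u)` for `u = log D`, with `A = 1 + log K`. By Grönwall's
inequality `A - u` decays at most at rate `C`, and exponentiating gives the bound on `D`. -/

section Gronwall

variable {f f' : ℝ → ℝ} {a b : ℝ}

theorem le_mul_exp_of_deriv_right_le {K : ℝ} (hf : ContinuousOn f (Icc a b))
    (hf' : ∀ x ∈ Ico a b, HasDerivWithinAt f (f' x) (Ici x) x)
    (bound : ∀ x ∈ Ico a b, f' x ≤ K * f x) :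
    ∀ x ∈ Icc a b, f x ≤ f a * exp (K * (x - a)) := by
  intro x hx
  rw [← gronwallBound_ε0]
  exact le_gronwallBound_of_liminf_deriv_right_le hf
    (fun y hy _ hr ↦ (hf' y hy).liminf_right_slope_le hr) le_rfl
    (fun y hy ↦ (bound y hy).trans_eq (add_zero _).symm) x hx

theorem le_sub_mul_exp_of_deriv_right_le_mul_sub {A C : ℝ} (hf : ContinuousOn f (Icc a b))
    (hf' : ∀ x ∈ Ico a b, HasDerivWithinAt f (f' x) (Ici x) x)
    (bound : ∀ x ∈ Ico a b, f' x ≤ C * (A - f x)) :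
    ∀ x ∈ Icc a b, f x ≤ A - (A - f a) * exp (-C * (x - a)) := by
  intro x hx
  have shifted_le : f x - A ≤ (f a - A) * exp (-C * (x - a)) :=
    le_mul_exp_of_deriv_right_le (f := fun y ↦ f y - A) (hf.sub continuousOn_const)
      (fun y hy ↦ (hf' y hy).sub_const A) (fun y hy ↦ by linarith [bound y hy]) x hx
  linarith

theorem le_exp_sub_mul_exp_of_deriv_right_le_mul_sub_log {A C : ℝ}
    (hf : ContinuousOn f (Icc a b)) (hpos : ∀ x ∈ Icc a b, 0 < f x)
    (hf' : ∀ x ∈ Ico a b, HasDerivWithinAt f (f' x) (Ici x) x)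
    (bound : ∀ x ∈ Ico a b, f' x ≤ C * f x * (A - log (f x))) :
    ∀ x ∈ Icc a b, f x ≤ exp (A - (A - log (f a)) * exp (-C * (x - a))) := by
  have log_deriv_le : ∀ x ∈ Ico a b, f' x / f x ≤ C * (A - log (f x)) := by
    intro x hx
    rw [div_le_iff₀ (hpos x (Ico_subset_Icc_self hx))]
    linarith [bound x hx]
  intro x hx
  rw [← log_le_iff_le_exp (hpos x hx)]
  exact le_sub_mul_exp_of_deriv_right_le_mul_sub (hf.log fun y hy ↦ (hpos y hy).ne')
    (fun y hy ↦ (hf' y hy).log (hpos y (Ico_subset_Icc_self hy)).ne') log_deriv_le x hx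

end Gronwall

theorem statement17_general {K C a b : ℝ} (hK : 0 < K) {D D' : ℝ → ℝ}
    (hcont : ContinuousOn D (Icc a b))
    (hderiv : ∀ t ∈ Ico a b, HasDerivWithinAt D (D' t) (Ici t) t)
    (hpos : ∀ t ∈ Icc a b, 0 < D t)
    (hineq : ∀ t ∈ Ico a b, D' t ≤ C * D t * (1 + log (K / D t))) :
    ∀ t ∈ Icc a b,
      D t ≤ K * exp (1 - (1 + log (K / D a)) * exp (-C * (t - a))) := by
  have one_add_log_div : ∀ t ∈ Icc a b, 1 + log (K / D t) = 1 + log K - log (D t) := by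
    intro t ht
    rw [log_div hK.ne' (hpos t ht).ne', add_sub_assoc]
  have gompertz_ineq : ∀ t ∈ Ico a b, D' t ≤ C * D t * (1 + log K - log (D t)) := by
    intro t ht
    rw [← one_add_log_div t (Ico_subset_Icc_self ht)]
    exact hineq t ht
  intro t ht
  calc D t
      ≤ exp (1 + log K - (1 + log K - log (D a)) * exp (-C * (t - a))) :=
        le_exp_sub_mul_exp_of_deriv_right_le_mul_sub_log hcont hpos hderiv gompertz_ineq t ht
    _ = exp (log K + (1 - (1 + log (K / D a)) * exp (-C * (t - a)))) := by
        rw [one_add_log_div a (left_mem_Icc.2 (ht.1.trans ht.2))]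
        ring_nf
    _ = K * exp (1 - (1 + log (K / D a)) * exp (-C * (t - a))) := by
        rw [exp_add, exp_log hK]

/-- Osgood/Grönwall-type lemma with a logarithmic factor: if
`0 < D ≤ d` and `D′ ≤ C D (1 + log(16d/D))` on `[0,T]`, then
`D(t) ≤ 16d · exp[1 − (1 + log(16d/D(0))) e^{−Ct}]` on `[0,T]`. -/
theorem statement17 (d : ℕ) (hd : 1 ≤ d) (C T : ℝ) (hC : 0 < C) (hT : 0 < T)
    (D D' : ℝ → ℝ)
    (hderiv : ∀ t ∈ Set.Icc (0:ℝ) T, HasDerivAt D (D' t) t)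
    (hpos : ∀ t ∈ Set.Icc (0:ℝ) T, 0 < D t)
    (hle : ∀ t ∈ Set.Icc (0:ℝ) T, D t ≤ d)
    (hineq : ∀ t ∈ Set.Icc (0:ℝ) T,
      D' t ≤ C * D t * (1 + Real.log (16 * d / D t))) :
    ∀ t ∈ Set.Icc (0:ℝ) T,
      D t ≤ 16 * d *
        Real.exp (1 - (1 + Real.log (16 * d / D 0)) * Real.exp (-C * t)) := by
  simpa only [sub_zero] using statement17_general (by positivity) (HasDerivAt.continuousOn hderiv)
    (fun t ht ↦ (hderiv t (Ico_subset_Icc_self ht)).hasDerivWithinAt) hpos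
    (fun t ht ↦ hineq t (Ico_subset_Icc_self ht))
end
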